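/- The set LWO(ℤ_{≥0}ⁿ) of translation-invariant linear well-orders on the additive monoid ℤ_{≥0}ⁿ is a closed subset of LO(ℤ_{≥0}ⁿ); in particular, LWO(ℤ_{≥0}ⁿ) is compact. -/

import Mathlib

/-!
A left order on `ℤ_{≥0}ⁿ` is a well-order exactly when `0` is its least element
(`mem_LWOSet_iff`). If `c < 0`, the multiples of `c` descend forever; conversely, if `0` is least,
the order extends the componentwise partial order, which is a well-quasi-order by Dickson's lemma,
so it has no infinite descending sequence. Having `0` as least element is the intersection of the
conditions `0 < c` over `c ≠ 0`, and each `U_{0,c}` is clopen because its complement is `U_{c,0}`.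

The space `LO(G)` is compact for every `G`: an ultrafilter `F` on it converges to the order
"`a < b` for `F`-almost every order" (`LeftAddOrder.ultraLim`).
-/


/-- A left order on an additive semigroup: a strict linear (total) order `r`
such that `r a b` implies `r (c + a) (c + b)` for all `c`. -/
def IsLeftAddOrder {G : Type*} [Add G] (r : G → G → Prop) : Prop :=
  IsStrictTotalOrder G r ∧ ∀ a b c : G, r a b → r (c + a) (c + b)

/-- The set `LO(G)` of left orders on `G`. -/
def LeftAddOrder (G : Type*) [Add G] : Type _ :=
  {r : G → G → Prop // IsLeftAddOrder r}

/-- `U_{a,b}` is the set of left orders `<` with `a < b`. -/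
def UU {G : Type*} [Add G] (a b : G) : Set (LeftAddOrder G) := {r | r.1 a b}

/-- `LO(G)` carries the smallest topology in which every `U_{a,b}` is open. -/
instance {G : Type*} [Add G] : TopologicalSpace (LeftAddOrder G) :=
  TopologicalSpace.generateFrom {s | ∃ a b : G, s = UU a b}

/-- `LWO(ℤ_{≥0}ⁿ)`: the set of left orders on `ℤ_{≥0}ⁿ = (Fin n → ℕ)` that are
well-orders (every nonempty subset has a least element). -/
def LWOSet (n : ℕ) : Set (LeftAddOrder (Fin n → ℕ)) :=
  {r | ∀ s : Set (Fin n → ℕ), s.Nonempty → ∃ m ∈ s, ∀ x ∈ s, m = x ∨ r.1 m x}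

section LeftAddOrder

variable {G : Type*} [Add G]

theorem LeftAddOrder.irrefl (r : LeftAddOrder G) (a : G) : ¬ r.1 a a :=
  r.2.1.toIsStrictOrder.toIrrefl.irrefl a

theorem LeftAddOrder.trans (r : LeftAddOrder G) {a b c : G} (h : r.1 a b) (h' : r.1 b c) :
    r.1 a c :=
  r.2.1.toIsStrictOrder.toIsTrans.trans a b c h h'

theorem LeftAddOrder.eq_of_not (r : LeftAddOrder G) {a b : G} (h : ¬ r.1 a b) (h' : ¬ r.1 b a) :
    a = b :=
  r.2.1.toTrichotomous.trichotomous a b h h'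

theorem isOpen_UU (a b : G) : IsOpen (UU a b) :=
  TopologicalSpace.isOpen_generateFrom_of_mem ⟨a, b, rfl⟩

theorem compl_UU {a b : G} (hab : a ≠ b) : (UU a b)ᶜ = UU b a := by
  ext r
  exact ⟨fun h => by_contra fun h' => hab (r.eq_of_not h h'),
    fun h h' => r.irrefl a (r.trans h' h)⟩

theorem isClosed_UU {a b : G} (hab : a ≠ b) : IsClosed (UU a b) :=
  ⟨compl_UU hab ▸ isOpen_UU b a⟩

theorem isLeftAddOrder_eventually (F : Ultrafilter (LeftAddOrder G)) :
    IsLeftAddOrder fun a b : G => ∀ᶠ s in (F : Filter (LeftAddOrder G)), s.1 a b := by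
  refine ⟨{ trichotomous := ?_, irrefl := ?_, trans := ?_ },
    fun a b c h => h.mono fun s hs => s.2.2 a b c hs⟩
  · intro a b h h'
    rw [← Ultrafilter.eventually_not] at h h'
    obtain ⟨s, hs, hs'⟩ := (h.and h').exists
    exact s.eq_of_not hs hs'
  · intro a h
    obtain ⟨s, hs⟩ := h.exists
    exact s.irrefl a hs
  · intro a b c h h'
    filter_upwards [h, h'] with s hs hs' using s.trans hs hs'

/-- The limit of an ultrafilter on `LO(G)`: the order in which `a < b` when this holds in almost
every order with respect to the ultrafilter. -/
def LeftAddOrder.ultraLim (F : Ultrafilter (LeftAddOrder G)) : LeftAddOrder G :=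
  ⟨_, isLeftAddOrder_eventually F⟩

theorem compactSpace_leftAddOrder : CompactSpace (LeftAddOrder G) := by
  refine ⟨isCompact_iff_ultrafilter_le_nhds.2 fun F _ =>
    ⟨LeftAddOrder.ultraLim F, Set.mem_univ _, ?_⟩⟩
  rw [TopologicalSpace.nhds_generateFrom]
  simp only [le_iInf_iff, Filter.le_principal_iff]
  rintro _ ⟨h, a, b, rfl⟩
  exact h

end LeftAddOrder

/-- A left order on `ℤ_{≥0}ⁿ` is a well-order if and only if `0` is its least element. -/
theorem mem_LWOSet_iff {n : ℕ} (r : LeftAddOrder (Fin n → ℕ)) :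
    r ∈ LWOSet n ↔ ∀ c : Fin n → ℕ, c ≠ 0 → r.1 0 c := by
  constructor
  · intro h c hc
    by_contra h0
    have hneg : r.1 c 0 := by_contra fun h' => hc (r.eq_of_not h' h0)
    obtain ⟨_, ⟨k, rfl⟩, hk⟩ := h (Set.range fun k : ℕ => k • c) (Set.range_nonempty _)
    have hlt : r.1 ((k + 1) • c) (k • c) := by
      have := r.2.2 c 0 (k • c) hneg
      rwa [add_zero, ← succ_nsmul] at this
    rcases hk _ ⟨k + 1, rfl⟩ with heq | hgt
    · exact r.irrefl (k • c) (by rwa [← show k • c = (k + 1) • c from heq] at hlt)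
    · exact r.irrefl _ (r.trans hlt hgt)
  · intro h s hs
    have hext : ∀ a b : Fin n → ℕ, a ≤ b → ¬ r.1 b a := by
      intro a b hab hba
      obtain ⟨c, rfl⟩ := exists_add_of_le hab
      rcases eq_or_ne c 0 with rfl | hc
      · exact r.irrefl a (by simpa using hba)
      · exact r.irrefl a (r.trans (by simpa using r.2.2 0 c a (h c hc)) hba)
    have := r.2.1
    have hwf : WellFounded r.1 := by
      rw [RelEmbedding.wellFounded_iff_isEmpty]
      refine ⟨fun f => ?_⟩
      -- Dickson's lemma: `Fin n → ℕ` is well-quasi-ordered.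
      obtain ⟨i, j, hij, hle⟩ := wellQuasiOrdered_le (α := Fin n → ℕ) f
      exact hext _ _ hle (f.map_rel_iff.2 hij)
    obtain ⟨m, hm, hmin⟩ := hwf.has_min s hs
    refine ⟨m, hm, fun x hx => ?_⟩
    by_contra! hcon
    exact hcon.1 (r.eq_of_not hcon.2 (hmin x hx))

/-- `LWO(ℤ_{≥0}ⁿ)` is a closed subset of `LO(ℤ_{≥0}ⁿ)`; in particular it is
compact. -/
theorem stmt15 (n : ℕ) : IsClosed (LWOSet n) ∧ IsCompact (LWOSet n) := by
  have hEq : LWOSet n = ⋂ (c : Fin n → ℕ) (_ : c ≠ 0), UU 0 c := by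
    ext r
    simp only [mem_LWOSet_iff, Set.mem_iInter]
    rfl
  have hcl : IsClosed (LWOSet n) := by
    rw [hEq]
    exact isClosed_biInter fun c hc => isClosed_UU (Ne.symm hc)
  have := compactSpace_leftAddOrder (G := Fin n → ℕ)
  exact ⟨hcl, hcl.isCompact⟩
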